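/- Let n ≥ 1 be an integer. There exists a constant K > 0, depending only on n, with the following property. Let s ∈ (0,1), let f ∈ L²(Ω), let λ > I, let u be a weak solution of the fractional Laplacian problem and ũ a weak solution of the truncated nonlocal problem, both with the same data f, and assume C₁ > 0 is such that C₁·‖v‖_{H^s(Ω∪Ω_I)} ≤ |||v||| for every test function v. If ũ_N : ℝⁿ → ℝ is a measurable function and E ≥ 0 satisfies ‖ũ − ũ_N‖_{H^s(Ω∪Ω_I)} ≤ E, then ‖u − ũ_N‖_{H^s(Ω∪Ω_I)} ≤ (K/(C₁²·s·(λ−I)^{2s}))·‖u‖_{L²(Ω)} + E. -/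

import Mathlib

open MeasureTheory Real Set

noncomputable section

abbrev Eucl (n : ℕ) := EuclideanSpace ℝ (Fin n)

/-- The normalizing constant `c_{n,s}` of the fractional Laplacian. -/
def cns (n : ℕ) (s : ℝ) : ℝ :=
  s * (2 : ℝ) ^ (2 * s) * Real.Gamma ((n + 2) / 2) /
    (Real.Gamma (1 / 2) * Real.Gamma (1 - s))

/-- The interaction domain `Ω_I = {y ∈ ℝⁿ∖Ω : |y−x| < λ for some x ∈ Ω}`. -/
def interDom {n : ℕ} (Ω : Set (Eucl n)) (lam : ℝ) : Set (Eucl n) :=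
  {y | y ∉ Ω ∧ ∃ x ∈ Ω, ‖y - x‖ < lam}

/-- The bilinear form `B_S(u,v) = ∬_S (u(y)−u(x))(v(y)−v(x))/|y−x|^{n+2s} dy dx`. -/
def Bform {n : ℕ} (s : ℝ) (S : Set (Eucl n × Eucl n)) (u v : Eucl n → ℝ) : ℝ :=
  ∫ p in S, (u p.2 - u p.1) * (v p.2 - v p.1) / ‖p.2 - p.1‖ ^ ((n : ℝ) + 2 * s)

/-- `T = {(x,y) ∈ (Ω∪Ω_I)×(Ω∪Ω_I) : |y−x| < λ}`. -/
def Tset {n : ℕ} (Ω : Set (Eucl n)) (lam : ℝ) : Set (Eucl n × Eucl n) :=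
  {p | p.1 ∈ Ω ∪ interDom Ω lam ∧ p.2 ∈ Ω ∪ interDom Ω lam ∧ ‖p.2 - p.1‖ < lam}

/-- The energy seminorm `|||v||| = ((c_{n,s}/4)·B_T(v,v))^{1/2}`. -/
def energyNorm {n : ℕ} (s : ℝ) (Ω : Set (Eucl n)) (lam : ℝ) (v : Eucl n → ℝ) : ℝ :=
  Real.sqrt (cns n s / 4 * Bform s (Tset Ω lam) v v)

/-- The `H^s(D)` norm `(∫_D v² + B_{D×D}(v,v))^{1/2}`. -/
def HsNorm {n : ℕ} (s : ℝ) (D : Set (Eucl n)) (v : Eucl n → ℝ) : ℝ :=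
  Real.sqrt ((∫ x in D, v x ^ 2) + Bform s (D ×ˢ D) v v)

/-- The `L²(Ω)` norm. -/
def L2NormOn {n : ℕ} (Ω : Set (Eucl n)) (v : Eucl n → ℝ) : ℝ :=
  Real.sqrt (∫ x in Ω, v x ^ 2)

/-- The integrand of `B_S(u,v)`. -/
def gagIntegrand {n : ℕ} (s : ℝ) (u v : Eucl n → ℝ) : Eucl n × Eucl n → ℝ :=
  fun p => (u p.2 - u p.1) * (v p.2 - v p.1) / ‖p.2 - p.1‖ ^ ((n : ℝ) + 2 * s)

/-- A test function: measurable, square-integrable, vanishing a.e. off `Ω`,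
with finite Gagliardo energy. -/
def IsTestFun {n : ℕ} (s : ℝ) (Ω : Set (Eucl n)) (v : Eucl n → ℝ) : Prop :=
  Measurable v ∧ Integrable (fun x => v x ^ 2) ∧ (∀ᵐ x ∂volume, x ∉ Ω → v x = 0) ∧
    Integrable (fun p : Eucl n × Eucl n =>
      (v p.2 - v p.1) ^ 2 / ‖p.2 - p.1‖ ^ ((n : ℝ) + 2 * s))

/-- Weak solution of the fractional Laplacian problem with data `f`. -/
def IsFracSol {n : ℕ} (s : ℝ) (Ω : Set (Eucl n)) (f u : Eucl n → ℝ) : Prop :=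
  IsTestFun s Ω u ∧ ∀ v, IsTestFun s Ω v →
    Integrable (gagIntegrand s u v) ∧
    cns n s / 2 * Bform s Set.univ u v = ∫ x in Ω, f x * v x

/-- Weak solution of the truncated nonlocal problem with data `f`. -/
def IsTruncSol {n : ℕ} (s : ℝ) (Ω : Set (Eucl n)) (lam : ℝ) (f u : Eucl n → ℝ) : Prop :=
  IsTestFun s Ω u ∧ ∀ v, IsTestFun s Ω v →
    IntegrableOn (gagIntegrand s u v) (Tset Ω lam) ∧
    cns n s / 2 * Bform s (Tset Ω lam) u v = ∫ x in Ω, f x * v x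

/-
Since `λ > diam Ω`, every pair of points at distance at least `λ` has at most one endpoint in `Ω`,
where the test functions live, so one of the two terms in each difference vanishes. The truncation
therefore changes the bilinear form by a zero-order term only:
`B_{ℝⁿ×ℝⁿ}(u,v) = B_T(u,v) + 2κ ∫ u v` with
`κ = ∫_{|z| ≥ λ} |z|^{-n-2s} dz = n |B₁| λ^{-2s} / (2s)`.
Hence `e = u − ũ` satisfies `B_T(e,v) = −2κ ∫ u v`. Testing with `v = e`, coercivity and
Cauchy–Schwarz give `C₁² ‖e‖_{H^s} ≤ (c_{n,s}/2) κ ‖u‖_{L²}`, and `c_{n,s}` is bounded uniformly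
in `s` because `Γ(1−s) ≥ 1`. The triangle inequality for the `H^s` norm concludes.
-/

section LpNorm

variable {α : Type*} [MeasurableSpace α] {μ : Measure α}

lemma lpNorm_two_sq {f : α → ℝ} (hf : AEStronglyMeasurable f μ) :
    lpNorm f 2 μ ^ 2 = ∫ x, f x ^ 2 ∂μ := by
  have h0 : 0 ≤ ∫ x, f x ^ 2 ∂μ := integral_nonneg fun x => sq_nonneg _
  rw [lpNorm_eq_integral_norm_rpow_toReal two_ne_zero ENNReal.ofNat_ne_top hf]
  simp only [ENNReal.toReal_ofNat, rpow_ofNat, norm_eq_abs, sq_abs]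
  rw [← one_div, ← sqrt_eq_rpow, sq_sqrt h0]

lemma norm_integral_mul_le_lpNorm_mul_lpNorm {𝕜 : Type*} [RCLike 𝕜] {p q : ENNReal}
    [p.HolderConjugate q] {f g : α → 𝕜} (hf : MemLp f p μ) (hg : MemLp g q μ) :
    ‖∫ x, f x * g x ∂μ‖ ≤ lpNorm f p μ * lpNorm g q μ := by
  have hfg : AEStronglyMeasurable (f • g) μ := hf.1.smul hg.1
  calc ‖∫ x, f x * g x ∂μ‖ ≤ ∫ x, ‖f x * g x‖ ∂μ := norm_integral_le_integral_norm _
    _ = lpNorm (f • g) 1 μ := (lpNorm_one_eq_integral_norm hfg).symm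
    _ = (eLpNorm (f • g) 1 μ).toReal := (toReal_eLpNorm hfg).symm
    _ ≤ (eLpNorm f p μ * eLpNorm g q μ).toReal :=
        ENNReal.toReal_mono (ENNReal.mul_ne_top hf.2.ne hg.2.ne)
          (eLpNorm_smul_le_mul_eLpNorm hg.1 hf.1)
    _ = lpNorm f p μ * lpNorm g q μ := by
        rw [ENNReal.toReal_mul, toReal_eLpNorm hf.1, toReal_eLpNorm hg.1]

end LpNorm

lemma sqrt_add_sq_add_add_sq_le (a b c d : ℝ) :
    √((a + b) ^ 2 + (c + d) ^ 2) ≤ √(a ^ 2 + c ^ 2) + √(b ^ 2 + d ^ 2) := by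
  simpa only [Complex.norm_eq_sqrt_sq_add_sq, Complex.add_re, Complex.add_im] using
    norm_add_le (⟨a, c⟩ : ℂ) ⟨b, d⟩

section TailKernel

variable {E : Type*} [NormedAddCommGroup E]

/-- The tail at radius `r` of the radial kernel `‖z‖ ^ (-a)`: it agrees with that kernel for
`r ≤ ‖z‖` and vanishes for `‖z‖ < r`. With `a = n + 2s` and `r = λ` it is the part of the
Gagliardo kernel that the truncation removes. -/
def tailKernel (a r : ℝ) (z : E) : ℝ :=
  (Ici r).indicator (fun t => (t ^ a)⁻¹) ‖z‖

lemma tailKernel_of_le {a r : ℝ} {z : E} (h : r ≤ ‖z‖) : tailKernel a r z = (‖z‖ ^ a)⁻¹ :=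
  indicator_of_mem h _

lemma tailKernel_of_lt {a r : ℝ} {z : E} (h : ‖z‖ < r) : tailKernel a r z = 0 :=
  indicator_of_notMem h.not_ge _

lemma tailKernel_nonneg (a r : ℝ) (z : E) : 0 ≤ tailKernel a r z :=
  indicator_apply_nonneg fun _ => by positivity

lemma tailKernel_sub_comm (a r : ℝ) (x y : E) :
    tailKernel a r (x - y) = tailKernel a r (y - x) := by
  simp only [tailKernel, norm_sub_rev x y]

lemma pow_sub_one_smul_indicator_Ici_inv_rpow {d : ℕ} (hd : 1 ≤ d) (a r : ℝ) {t : ℝ}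
    (ht : 0 < t) :
    t ^ (d - 1) • (Ici r).indicator (fun t => (t ^ (d + a))⁻¹) t =
      (Ici r).indicator (fun t => t ^ (-1 - a)) t := by
  have hpow : t ^ (d - 1) * (t ^ (d + a))⁻¹ = t ^ (-1 - a) := by
    rw [← rpow_neg ht.le, ← rpow_natCast, ← rpow_add ht, Nat.cast_sub hd]
    congr 1
    push_cast
    ring
  simp only [indicator_apply, smul_eq_mul, mul_ite, mul_zero, hpow]

variable [NormedSpace ℝ E] [FiniteDimensional ℝ E] [Nontrivial E] [MeasurableSpace E] [BorelSpace E]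
  (μ : Measure E) [μ.IsAddHaarMeasure] {a r : ℝ}

lemma integrable_tailKernel (ha : 0 < a) (hr : 0 < r) :
    Integrable (tailKernel (Module.finrank ℝ E + a) r) μ := by
  have hradial : IntegrableOn ((Ici r).indicator fun t => t ^ (-1 - a)) (Ioi 0) := by
    refine Integrable.integrableOn ?_
    rw [integrable_indicator_iff measurableSet_Ici, integrableOn_Ici_iff_integrableOn_Ioi]
    exact integrableOn_Ioi_rpow_of_lt (by linarith) hr
  exact (integrable_fun_norm_addHaar μ).2 <| hradial.congr_fun (fun t ht =>
    (pow_sub_one_smul_indicator_Ici_inv_rpow Module.finrank_pos a r ht).symm) measurableSet_Ioi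

lemma integral_tailKernel (ha : 0 < a) (hr : 0 < r) :
    ∫ z, tailKernel (Module.finrank ℝ E + a) r z ∂μ =
      Module.finrank ℝ E * μ.real (Metric.ball 0 1) * (r ^ (-a) / a) := by
  have hradial : ∫ t in Ioi (0 : ℝ), t ^ (Module.finrank ℝ E - 1) •
      (Ici r).indicator (fun t => (t ^ (Module.finrank ℝ E + a))⁻¹) t = r ^ (-a) / a := by
    rw [setIntegral_congr_fun measurableSet_Ioi fun t ht =>
        pow_sub_one_smul_indicator_Ici_inv_rpow Module.finrank_pos a r ht,
      setIntegral_indicator measurableSet_Ici,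
      inter_eq_right.2 (Ici_subset_Ioi.2 hr), integral_Ici_eq_integral_Ioi,
      integral_Ioi_rpow_of_lt (by linarith) hr, show -1 - a + 1 = -a by ring, neg_div_neg_eq]
  unfold tailKernel
  rw [integral_fun_norm_addHaar, hradial, nsmul_eq_mul, smul_eq_mul, mul_assoc]

end TailKernel

lemma integral_prod_mul_comp_sub {G : Type*} [AddGroup G] [MeasurableSpace G] [MeasurableAdd₂ G]
    [MeasurableNeg G] {μ ν : Measure G} [SFinite μ] [μ.IsAddRightInvariant] [SFinite ν]
    {f g : G → ℝ} (hf : Integrable f ν) (hg : Integrable g μ) :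
    ∫ p : G × G, f p.2 * g (p.1 - p.2) ∂μ.prod ν = (∫ x, f x ∂ν) * ∫ x, g x ∂μ := by
  have hint : Integrable (fun p : G × G => f p.2 * g (p.1 - p.2)) (μ.prod ν) :=
    hf.convolution_integrand (ContinuousLinearMap.mul ℝ ℝ) hg
  rw [integral_prod_symm _ hint]
  simp only [integral_const_mul, integral_sub_right_eq_self, integral_mul_const]

section Gagliardo

variable {n : ℕ} {s : ℝ} {D : Set (Eucl n)} {v w : Eucl n → ℝ}

/-- The Gagliardo quotient `(v(y)−v(x))/|y−x|^{n/2+s}`, whose squared `L²(S)` norm is `B_S(v,v)`;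
it reduces the forms `B_S` to `L²` inner products. The denominator is a square root so that
squaring gives back the kernel of `Bform` literally. -/
def gagQuotient (s : ℝ) (v : Eucl n → ℝ) (p : Eucl n × Eucl n) : ℝ :=
  (v p.2 - v p.1) / √(‖p.2 - p.1‖ ^ ((n : ℝ) + 2 * s))

lemma gagQuotient_mul_gagQuotient (s : ℝ) (v w : Eucl n → ℝ) :
    gagQuotient s v * gagQuotient s w = gagIntegrand s v w := by
  ext p
  simp only [Pi.mul_apply, gagQuotient, gagIntegrand]
  rw [div_mul_div_comm, mul_self_sqrt (by positivity)]

lemma gagQuotient_sq (s : ℝ) (v : Eucl n → ℝ) (p : Eucl n × Eucl n) :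
    gagQuotient s v p ^ 2 = (v p.2 - v p.1) ^ 2 / ‖p.2 - p.1‖ ^ ((n : ℝ) + 2 * s) := by
  rw [gagQuotient, div_pow, sq_sqrt (by positivity)]

lemma gagQuotient_add (s : ℝ) (v w : Eucl n → ℝ) :
    gagQuotient s (v + w) = gagQuotient s v + gagQuotient s w := by
  ext p
  simp only [gagQuotient, Pi.add_apply]
  ring

lemma gagQuotient_sub (s : ℝ) (v w : Eucl n → ℝ) :
    gagQuotient s (v - w) = gagQuotient s v - gagQuotient s w := by
  ext p
  simp only [gagQuotient, Pi.sub_apply]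
  ring

lemma gagIntegrand_sub_left (s : ℝ) (u v w : Eucl n → ℝ) :
    gagIntegrand s (u - v) w = gagIntegrand s u w - gagIntegrand s v w := by
  simp only [← gagQuotient_mul_gagQuotient, gagQuotient_sub, sub_mul]

lemma measurable_gagQuotient (hv : Measurable v) : Measurable (gagQuotient s v) := by
  unfold gagQuotient
  fun_prop

lemma Bform_self_eq_integral_gagQuotient_sq (s : ℝ) (S : Set (Eucl n × Eucl n)) (v : Eucl n → ℝ) :
    Bform s S v v = ∫ p in S, gagQuotient s v p ^ 2 := by
  simp only [Bform, gagQuotient_sq]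
  simp only [sq]

lemma Bform_self_nonneg (s : ℝ) (S : Set (Eucl n × Eucl n)) (v : Eucl n → ℝ) :
    0 ≤ Bform s S v v := by
  rw [Bform_self_eq_integral_gagQuotient_sq]
  exact integral_nonneg fun p => sq_nonneg _

lemma HsNorm_eq_sqrt_lpNorm (s : ℝ) (D : Set (Eucl n)) (hv : Measurable v) :
    HsNorm s D v = √(lpNorm v 2 (volume.restrict D) ^ 2 +
      lpNorm (gagQuotient s v) 2 (volume.restrict (D ×ˢ D)) ^ 2) := by
  rw [HsNorm, Bform_self_eq_integral_gagQuotient_sq, lpNorm_two_sq hv.aestronglyMeasurable,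
    lpNorm_two_sq (measurable_gagQuotient hv).aestronglyMeasurable]

-- If an integral in `HsNorm s D w` diverges, so does the corresponding one in
-- `HsNorm s D (v + w)`, and both then take the junk value `0`.
lemma HsNorm_add_le (hv : Measurable v) (hvD : MemLp v 2 (volume.restrict D))
    (hvq : MemLp (gagQuotient s v) 2 (volume.restrict (D ×ˢ D))) (hw : Measurable w) :
    HsNorm s D (v + w) ≤ HsNorm s D v + HsNorm s D w := by
  rw [HsNorm_eq_sqrt_lpNorm s D hv, HsNorm_eq_sqrt_lpNorm s D hw,
    HsNorm_eq_sqrt_lpNorm s D (hv.add hw), gagQuotient_add]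
  refine le_trans ?_ (sqrt_add_sq_add_add_sq_le _ _ _ _)
  gcongr
  exacts [lpNorm_nonneg, lpNorm_add_le hvD one_le_two, lpNorm_nonneg,
    lpNorm_add_le hvq one_le_two]

lemma L2NormOn_le_HsNorm {Ω : Set (Eucl n)} (hΩ : Ω ⊆ D) (hv : MemLp v 2 (volume.restrict D)) :
    L2NormOn Ω v ≤ HsNorm s D v := by
  have hmono : ∫ x in Ω, v x ^ 2 ≤ ∫ x in D, v x ^ 2 :=
    setIntegral_mono_set hv.integrable_sq (.of_forall fun x => sq_nonneg _) hΩ.eventuallyLE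
  exact sqrt_le_sqrt (hmono.trans (le_add_of_nonneg_right (Bform_self_nonneg s _ v)))

end Gagliardo

namespace IsTestFun

variable {n : ℕ} {s : ℝ} {Ω : Set (Eucl n)} {v w : Eucl n → ℝ}

lemma memLp (hv : IsTestFun s Ω v) : MemLp v 2 :=
  (memLp_two_iff_integrable_sq hv.1.aestronglyMeasurable).2 hv.2.1

lemma memLp_gagQuotient (hv : IsTestFun s Ω v) : MemLp (gagQuotient s v) 2 := by
  refine (memLp_two_iff_integrable_sq (measurable_gagQuotient hv.1).aestronglyMeasurable).2 ?_
  simpa only [gagQuotient_sq] using hv.2.2.2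

lemma integrable_gagIntegrand (hv : IsTestFun s Ω v) (hw : IsTestFun s Ω w) :
    Integrable (gagIntegrand s v w) := by
  rw [← gagQuotient_mul_gagQuotient]
  exact hv.memLp_gagQuotient.integrable_mul hw.memLp_gagQuotient

lemma sub (hv : IsTestFun s Ω v) (hw : IsTestFun s Ω w) : IsTestFun s Ω (v - w) := by
  refine ⟨hv.1.sub hw.1, (hv.memLp.sub hw.memLp).integrable_sq, ?_, ?_⟩
  · filter_upwards [hv.2.2.1, hw.2.2.1] with x hvx hwx hx
    rw [Pi.sub_apply, hvx hx, hwx hx, sub_zero]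
  · have hq := (hv.memLp_gagQuotient.sub hw.memLp_gagQuotient).integrable_sq
    simpa only [← gagQuotient_sub, gagQuotient_sq] using hq

lemma lpNorm_eq_L2NormOn (hv : IsTestFun s Ω v) : lpNorm v 2 volume = L2NormOn Ω v := by
  rw [L2NormOn, setIntegral_eq_integral_of_ae_compl_eq_zero, ← lpNorm_two_sq hv.memLp.1,
    sqrt_sq lpNorm_nonneg]
  filter_upwards [hv.2.2.1] with x hvx hx
  rw [hvx hx, zero_pow two_ne_zero]

end IsTestFun

section NormalizingConstant

lemma cns_pos (n : ℕ) {s : ℝ} (hs : s ∈ Ioo 0 1) : 0 < cns n s := by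
  have hs₀ : 0 < s := hs.1
  have hΓ : 0 < Gamma (1 - s) := Gamma_pos_of_pos (sub_pos.2 hs.2)
  unfold cns
  positivity

lemma cns_le (n : ℕ) {s : ℝ} (hs : s ∈ Ioo 0 1) :
    cns n s ≤ 4 * (Gamma ((n + 2) / 2) / Gamma (1 / 2)) := by
  have hs₀ : 0 < s := hs.1
  have hΓ : 1 ≤ Gamma (1 - s) :=
    Gamma_one.ge.trans <| Gamma_strictAntiOn_Ioc.antitoneOn
      ⟨sub_pos.2 hs.2, sub_le_self _ hs₀.le⟩ ⟨one_pos, le_rfl⟩ (sub_le_self _ hs₀.le)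
  have hpow : (2 : ℝ) ^ (2 * s) ≤ 4 := by
    calc (2 : ℝ) ^ (2 * s) ≤ 2 ^ (2 : ℝ) := by
          gcongr
          exacts [one_le_two, by linarith [hs.2]]
      _ = 4 := by norm_num
  calc cns n s ≤ 1 * 4 * Gamma ((n + 2) / 2) / (Gamma (1 / 2) * 1) := by
        unfold cns
        gcongr
        exact hs.2.le
    _ = 4 * (Gamma ((n + 2) / 2) / Gamma (1 / 2)) := by ring

lemma half_cns_mul_integral_tailKernel_le (n : ℕ) [NeZero n] {s r lam : ℝ} (hs : s ∈ Ioo 0 1)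
    (hr : 0 < r) (hlam : r ≤ lam) :
    cns n s / 2 * ∫ z : Eucl n, tailKernel (n + 2 * s) lam z ≤
      Gamma ((n + 2) / 2) / Gamma (1 / 2) * (n * volume.real (Metric.ball (0 : Eucl n) 1)) /
        (s * r ^ (2 * s)) := by
  have hs₀ : 0 < s := hs.1
  have hlam₀ : 0 < lam := hr.trans_le hlam
  have htail : ∫ z : Eucl n, tailKernel (n + 2 * s) lam z =
      n * volume.real (Metric.ball (0 : Eucl n) 1) * (lam ^ (-(2 * s)) / (2 * s)) := by
    simpa using integral_tailKernel (volume : Measure (Eucl n)) (a := 2 * s) (by positivity) hlam₀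
  have hdecay : lam ^ (-(2 * s)) ≤ (r ^ (2 * s))⁻¹ := by
    rw [← rpow_neg hr.le]
    exact rpow_le_rpow_of_nonpos hr hlam (by linarith)
  calc cns n s / 2 * ∫ z : Eucl n, tailKernel (n + 2 * s) lam z
      ≤ 4 * (Gamma ((n + 2) / 2) / Gamma (1 / 2)) / 2 *
          (n * volume.real (Metric.ball (0 : Eucl n) 1) * ((r ^ (2 * s))⁻¹ / (2 * s))) := by
        rw [htail]
        gcongr
        exact cns_le n hs
    _ = Gamma ((n + 2) / 2) / Gamma (1 / 2) * (n * volume.real (Metric.ball (0 : Eucl n) 1)) /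
          (s * r ^ (2 * s)) := by
        field_simp
        ring

end NormalizingConstant

section FarField

variable {n : ℕ} {s lam : ℝ} {Ω : Set (Eucl n)} {u ut v : Eucl n → ℝ}

lemma union_interDom_eq_union_thickening (Ω : Set (Eucl n)) (lam : ℝ) :
    Ω ∪ interDom Ω lam = Ω ∪ Metric.thickening lam Ω := by
  ext y
  simp only [interDom, mem_union, mem_ofPred_eq, Metric.mem_thickening_iff, dist_eq_norm]
  tauto

lemma measurableSet_Tset (hΩ : MeasurableSet Ω) (lam : ℝ) : MeasurableSet (Tset Ω lam) := by
  have hD : MeasurableSet (Ω ∪ interDom Ω lam) := by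
    rw [union_interDom_eq_union_thickening]
    exact hΩ.union Metric.isOpen_thickening.measurableSet
  exact (measurable_fst hD).inter <| (measurable_snd hD).inter <|
    measurableSet_lt (measurable_snd.sub measurable_fst).norm measurable_const

lemma mem_Tset_of_mem_or_mem {p : Eucl n × Eucl n} (hp : p.1 ∈ Ω ∨ p.2 ∈ Ω)
    (hlt : ‖p.2 - p.1‖ < lam) : p ∈ Tset Ω lam := by
  have hlt' : ‖p.1 - p.2‖ < lam := by rwa [norm_sub_rev]
  have hmem {x y : Eucl n} (hx : x ∈ Ω) (hxy : ‖y - x‖ < lam) : y ∈ Ω ∪ interDom Ω lam :=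
    (em (y ∈ Ω)).imp_right fun hy => ⟨hy, x, hx, hxy⟩
  rcases hp with hp | hp
  exacts [⟨.inl hp, hmem hp hlt, hlt⟩, ⟨hmem hp hlt', .inl hp, hlt⟩]

lemma indicator_compl_Tset_gagIntegrand (hb : Bornology.IsBounded Ω) (hlam : Metric.diam Ω < lam)
    {p : Eucl n × Eucl n} (h₁ : p.1 ∉ Ω → u p.1 = 0 ∧ v p.1 = 0)
    (h₂ : p.2 ∉ Ω → u p.2 = 0 ∧ v p.2 = 0) :
    (Tset Ω lam)ᶜ.indicator (gagIntegrand s u v) p =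
      u p.1 * v p.1 * tailKernel (n + 2 * s) lam (p.2 - p.1) +
        u p.2 * v p.2 * tailKernel (n + 2 * s) lam (p.1 - p.2) := by
  rw [tailKernel_sub_comm _ _ p.1 p.2]
  rcases lt_or_ge ‖p.2 - p.1‖ lam with hlt | hle
  · rw [tailKernel_of_lt hlt, mul_zero, mul_zero, add_zero]
    refine indicator_apply_eq_zero.2 fun hpT => ?_
    have hp := not_or.1 fun hp => hpT (mem_Tset_of_mem_or_mem hp hlt)
    simp only [gagIntegrand, h₁ hp.1, h₂ hp.2, sub_self, zero_mul, zero_div]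
  · have hpT : p ∉ Tset Ω lam := fun hp => hle.not_gt hp.2.2
    have hnot_both : p.1 ∉ Ω ∨ p.2 ∉ Ω := by
      by_contra! hp
      have hdiam := Metric.dist_le_diam_of_mem hb hp.2 hp.1
      rw [dist_eq_norm] at hdiam
      linarith
    rw [indicator_of_mem hpT, tailKernel_of_le hle, gagIntegrand, div_eq_mul_inv]
    rcases hnot_both with hp | hp
    · simp only [h₁ hp, sub_zero, zero_mul, zero_add]
    · simp only [h₂ hp, zero_sub, neg_mul_neg, zero_mul, add_zero]

lemma setIntegral_compl_Tset_gagIntegrand [NeZero n] (hs : 0 < s) (hΩ : MeasurableSet Ω)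
    (hb : Bornology.IsBounded Ω) (hlam : Metric.diam Ω < lam)
    (hu : IsTestFun s Ω u) (hv : IsTestFun s Ω v) :
    ∫ p in (Tset Ω lam)ᶜ, gagIntegrand s u v p =
      2 * ((∫ x, u x * v x) * ∫ z : Eucl n, tailKernel (n + 2 * s) lam z) := by
  have hlam₀ : 0 < lam := Metric.diam_nonneg.trans_lt hlam
  set k : Eucl n → ℝ := tailKernel (n + 2 * s) lam
  let F (p : Eucl n × Eucl n) : ℝ := u p.2 * v p.2 * k (p.1 - p.2)
  have hk : Integrable k := by
    simpa using integrable_tailKernel (volume : Measure (Eucl n)) (a := 2 * s) (by positivity) hlam₀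
  have huv : Integrable (fun x => u x * v x) := hu.memLp.integrable_mul hv.memLp
  have hF : Integrable F := huv.convolution_integrand (ContinuousLinearMap.mul ℝ ℝ) hk
  have hFswap : Integrable fun p : Eucl n × Eucl n => F p.swap := hF.swap
  have hFint : ∫ p, F p = (∫ x, u x * v x) * ∫ z, k z := integral_prod_mul_comp_sub huv hk
  have hswap : ∫ p : Eucl n × Eucl n, F p.swap = ∫ p, F p := integral_prod_swap F
  have hzero : ∀ᵐ x, x ∉ Ω → u x = 0 ∧ v x = 0 := by
    filter_upwards [hu.2.2.1, hv.2.2.1] with x hux hvx hx using ⟨hux hx, hvx hx⟩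
  have hae : (Tset Ω lam)ᶜ.indicator (gagIntegrand s u v) =ᵐ[volume] fun p => F p.swap + F p := by
    filter_upwards [Measure.quasiMeasurePreserving_fst.ae hzero,
      Measure.quasiMeasurePreserving_snd.ae hzero] with p h₁ h₂
    exact indicator_compl_Tset_gagIntegrand hb hlam h₁ h₂
  rw [← integral_indicator (measurableSet_Tset hΩ lam).compl, integral_congr_ae hae,
    integral_add hFswap hF, hswap, hFint, two_mul]

lemma Bform_univ_eq_Bform_Tset_add [NeZero n] (hs : 0 < s) (hΩ : MeasurableSet Ω)
    (hb : Bornology.IsBounded Ω) (hlam : Metric.diam Ω < lam)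
    (hu : IsTestFun s Ω u) (hv : IsTestFun s Ω v) :
    Bform s univ u v = Bform s (Tset Ω lam) u v +
      2 * ((∫ x, u x * v x) * ∫ z : Eucl n, tailKernel (n + 2 * s) lam z) := by
  rw [← setIntegral_compl_Tset_gagIntegrand hs hΩ hb hlam hu hv]
  simp only [Bform, setIntegral_univ]
  exact (integral_add_compl (measurableSet_Tset hΩ lam) (hu.integrable_gagIntegrand hv)).symm

lemma Bform_Tset_sub_eq [NeZero n] {f : Eucl n → ℝ} (hs : s ∈ Ioo 0 1) (hΩ : MeasurableSet Ω)
    (hb : Bornology.IsBounded Ω) (hlam : Metric.diam Ω < lam) (hu : IsFracSol s Ω f u)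
    (hut : IsTruncSol s Ω lam f ut) (hv : IsTestFun s Ω v) :
    Bform s (Tset Ω lam) (u - ut) v =
      -(2 * ((∫ x, u x * v x) * ∫ z : Eucl n, tailKernel (n + 2 * s) lam z)) := by
  have hsub : Bform s (Tset Ω lam) (u - ut) v =
      Bform s (Tset Ω lam) u v - Bform s (Tset Ω lam) ut v := by
    change ∫ p in Tset Ω lam, gagIntegrand s (u - ut) v p = _
    rw [gagIntegrand_sub_left]
    exact integral_sub (hu.1.integrable_gagIntegrand hv).integrableOn
      (hut.1.integrable_gagIntegrand hv).integrableOn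
  have hsame : Bform s univ u v = Bform s (Tset Ω lam) ut v :=
    mul_left_cancel₀ (half_pos (cns_pos n hs)).ne' ((hu.2 v hv).2.trans (hut.2 v hv).2.symm)
  linarith [Bform_univ_eq_Bform_Tset_add hs.1 hΩ hb hlam hu.1 hv]

lemma sq_mul_HsNorm_sub_le [NeZero n] {f : Eucl n → ℝ} {C : ℝ} (hs : s ∈ Ioo 0 1)
    (hΩ : MeasurableSet Ω) (hb : Bornology.IsBounded Ω) (hlam : Metric.diam Ω < lam)
    (hu : IsFracSol s Ω f u) (hut : IsTruncSol s Ω lam f ut) (hC : 0 ≤ C)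
    (hcoer : C * HsNorm s (Ω ∪ interDom Ω lam) (u - ut) ≤ energyNorm s Ω lam (u - ut)) :
    C ^ 2 * HsNorm s (Ω ∪ interDom Ω lam) (u - ut) ≤
      cns n s / 2 * (∫ z : Eucl n, tailKernel (n + 2 * s) lam z) * L2NormOn Ω u := by
  have he := hu.1.sub hut.1
  set e := u - ut
  set X := HsNorm s (Ω ∪ interDom Ω lam) e
  set κ := ∫ z : Eucl n, tailKernel (n + 2 * s) lam z
  have hX : 0 ≤ X := sqrt_nonneg _
  have hU : 0 ≤ L2NormOn Ω u := sqrt_nonneg _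
  have hc : 0 < cns n s := cns_pos n hs
  have hκ : 0 ≤ κ := integral_nonneg fun z => tailKernel_nonneg _ _ _
  have hinner : -∫ x, u x * e x ≤ L2NormOn Ω u * X := by
    calc -∫ x, u x * e x ≤ ‖∫ x, u x * e x‖ := neg_le_abs _
      _ ≤ lpNorm u 2 volume * lpNorm e 2 volume :=
          norm_integral_mul_le_lpNorm_mul_lpNorm hu.1.memLp he.memLp
      _ = L2NormOn Ω u * L2NormOn Ω e := by rw [hu.1.lpNorm_eq_L2NormOn, he.lpNorm_eq_L2NormOn]
      _ ≤ L2NormOn Ω u * X := by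
          gcongr
          exact L2NormOn_le_HsNorm subset_union_left (he.memLp.restrict _)
  have henergy : C ^ 2 * X * X ≤ cns n s / 2 * κ * L2NormOn Ω u * X := by
    calc C ^ 2 * X * X = (C * X) ^ 2 := by ring
      _ ≤ energyNorm s Ω lam e ^ 2 := by gcongr
      _ = cns n s / 4 * Bform s (Tset Ω lam) e e :=
          sq_sqrt (mul_nonneg (by positivity) (Bform_self_nonneg _ _ _))
      _ = cns n s / 2 * κ * -∫ x, u x * e x := by
          rw [Bform_Tset_sub_eq hs hΩ hb hlam hu hut he]
          ring
      _ ≤ cns n s / 2 * κ * (L2NormOn Ω u * X) := by gcongr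
      _ = cns n s / 2 * κ * L2NormOn Ω u * X := by ring
  rcases hX.eq_or_lt with hX0 | hXpos
  · rw [← hX0, mul_zero]
    positivity
  · exact le_of_mul_le_mul_right henergy hXpos

end FarField

theorem stmt14_general (n : ℕ) (hn : 1 ≤ n) :
    ∃ K > (0 : ℝ), ∀ s ∈ Ioo (0 : ℝ) 1, ∀ Ω : Set (Eucl n), MeasurableSet Ω →
      Bornology.IsBounded Ω → ∀ lam : ℝ, Metric.diam Ω < lam →
      ∀ f u ut : Eucl n → ℝ, IsFracSol s Ω f u → IsTruncSol s Ω lam f ut → ∀ C₁ : ℝ, 0 < C₁ →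
        C₁ * HsNorm s (Ω ∪ interDom Ω lam) (u - ut) ≤ energyNorm s Ω lam (u - ut) →
      ∀ utN : Eucl n → ℝ, Measurable utN →
        HsNorm s (Ω ∪ interDom Ω lam) (u - utN) ≤
          K / (C₁ ^ 2 * s * (lam - Metric.diam Ω) ^ (2 * s)) * L2NormOn Ω u +
            HsNorm s (Ω ∪ interDom Ω lam) (ut - utN) := by
  have : NeZero n := ⟨Nat.one_le_iff_ne_zero.1 hn⟩
  have hball : 0 < volume.real (Metric.ball (0 : Eucl n) 1) :=
    ENNReal.toReal_pos (Metric.measure_ball_pos _ _ one_pos).ne' measure_ball_lt_top.ne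
  refine ⟨Gamma ((n + 2) / 2) / Gamma (1 / 2) * (n * volume.real (Metric.ball (0 : Eucl n) 1)),
    by positivity, ?_⟩
  intro s hs Ω hΩ hb lam hlam f u ut hu hut C₁ hC hcoer utN hutN
  have he := hu.1.sub hut.1
  have herr := sq_mul_HsNorm_sub_le hs hΩ hb hlam hu hut hC.le hcoer
  have hconst := half_cns_mul_integral_tailKernel_le n hs (sub_pos.2 hlam)
    (sub_le_self lam Metric.diam_nonneg)
  have htri := HsNorm_add_le he.1 (he.memLp.restrict (Ω ∪ interDom Ω lam))
    (he.memLp_gagQuotient.restrict _) (hut.1.1.sub hutN)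
  rw [sub_add_sub_cancel] at htri
  refine htri.trans (add_le_add_left ?_ _)
  rw [mul_assoc (C₁ ^ 2), mul_comm (C₁ ^ 2), ← div_div, div_mul_eq_mul_div,
    le_div_iff₀' (by positivity)]
  exact herr.trans (mul_le_mul_of_nonneg_right hconst (sqrt_nonneg _))

/-- For each dimension `n ≥ 1` there is a constant `K > 0`, depending
only on `n`, such that under the hypotheses of Statement 1 and given any measurable
`ũ_N` and `E ≥ 0` with `‖ũ − ũ_N‖_{H^s(Ω∪Ω_I)} ≤ E`, one has
`‖u − ũ_N‖_{H^s(Ω∪Ω_I)} ≤ (K/(C₁²·s·(λ−I)^{2s}))·‖u‖_{L²(Ω)} + E`. -/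
theorem stmt14 (n : ℕ) (hn : 1 ≤ n) :
    ∃ K > (0 : ℝ), ∀ (s : ℝ), s ∈ Set.Ioo (0 : ℝ) 1 →
      ∀ (Ω : Set (Eucl n)), Ω.Nonempty → IsOpen Ω → Bornology.IsBounded Ω →
      ∀ (lam : ℝ), Metric.diam Ω < lam →
      ∀ (f : Eucl n → ℝ), Measurable f → IntegrableOn (fun x => f x ^ 2) Ω →
      ∀ (u ut : Eucl n → ℝ),
        IsFracSol s Ω f u → IsTruncSol s Ω lam f ut →
      ∀ (C₁ : ℝ), 0 < C₁ →
        (∀ v, IsTestFun s Ω v →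
          C₁ * HsNorm s (Ω ∪ interDom Ω lam) v ≤ energyNorm s Ω lam v) →
      ∀ (utN : Eucl n → ℝ), Measurable utN →
      ∀ (E : ℝ), 0 ≤ E →
        HsNorm s (Ω ∪ interDom Ω lam) (ut - utN) ≤ E →
        HsNorm s (Ω ∪ interDom Ω lam) (u - utN) ≤
          K / (C₁ ^ 2 * s * (lam - Metric.diam Ω) ^ (2 * s)) * L2NormOn Ω u + E := by
  obtain ⟨K, hK, h⟩ := stmt14_general n hn
  exact ⟨K, hK, fun s hs Ω _ hΩ hb lam hlam f _ _ u ut hu hut C₁ hC hcoer utN hutN E _ hE =>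
    (h s hs Ω hΩ.measurableSet hb lam hlam f u ut hu hut C₁ hC (hcoer _ (hu.1.sub hut.1))
      utN hutN).trans (add_le_add_right hE _)⟩
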